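/- Syzygy Rank Criterion: With notation as in the context, the reduced projective hypersurface D = V(f) is strongly Euler homogeneous at the point p if and only if rk M'_f(p) = rk M_f(p); equivalently, if and only if the vector p lies in the ℂ-linear span of {ev_p(a) : a ∈ K} in ℂ^{n+1}. -/

import Mathlib

open MvPolynomial

noncomputable section

/-- The Jacobian syzygy module `K` of `f`, as a set:
tuples `a = (a_0, …, a_n)` of polynomials with `∑ a_i ∂f/∂x_i = 0`. -/
def syzSet (n : ℕ) (f : MvPolynomial (Fin (n + 1)) ℂ) :
    Set (Fin (n + 1) → MvPolynomial (Fin (n + 1)) ℂ) :=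
  {a | ∑ i, a i * pderiv i f = 0}

/-- The image of the syzygy module under coordinatewise evaluation at `p`. -/
def evSyz (n : ℕ) (f : MvPolynomial (Fin (n + 1)) ℂ) (p : Fin (n + 1) → ℂ) :
    Set (Fin (n + 1) → ℂ) :=
  (fun a => fun i => eval p (a i)) '' syzSet n f

/-- The syzygy rank `rk M'_f(p)`. -/
def syzRank (n : ℕ) (f : MvPolynomial (Fin (n + 1)) ℂ) (p : Fin (n + 1) → ℂ) : ℕ :=
  Module.finrank ℂ (Submodule.span ℂ (evSyz n f p))

/-- The augmented syzygy rank `rk M_f(p)`. -/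
def augSyzRank (n : ℕ) (f : MvPolynomial (Fin (n + 1)) ℂ) (p : Fin (n + 1) → ℂ) : ℕ :=
  Module.finrank ℂ (Submodule.span ℂ (evSyz n f p ∪ {p}))

/-- The dehomogenization `g(y_1,…,y_n) = f(1,y_1,…,y_n)`. -/
def dehom (n : ℕ) (f : MvPolynomial (Fin (n + 1)) ℂ) : MvPolynomial (Fin n) ℂ :=
  aeval (Fin.cons (1 : MvPolynomial (Fin n) ℂ) fun i => X i) f

/-- `D = V(f)` is strongly Euler homogeneous at `p` (with `p_0 = 1`): there exist an open
neighborhood `U` of `q = (p_1,…,p_n)` and analytic functions `a_i` on `U` vanishing at `q`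
with `g = ∑ a_i ∂g/∂y_i` on `U`, where `g` is the dehomogenization of `f`. -/
def StronglyEulerHomogeneousAt (n : ℕ) (f : MvPolynomial (Fin (n + 1)) ℂ)
    (p : Fin (n + 1) → ℂ) : Prop :=
  ∃ (U : Set (Fin n → ℂ)) (a : Fin n → (Fin n → ℂ) → ℂ),
    IsOpen U ∧ (fun i => p i.succ) ∈ U ∧
    (∀ i, ∀ y ∈ U, AnalyticAt ℂ (a i) y) ∧
    (∀ i, a i (fun j => p j.succ) = 0) ∧
    ∀ y ∈ U,
      eval y (dehom n f) = ∑ i, a i y * eval y (pderiv i (dehom n f))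

/-!
The values of the syzygies at `p` form a subspace, so `p` lies in their span exactly when some
syzygy takes the value `p` at `p`.

If a syzygy `a` evaluates to `p` at `p`, then `a 0` is a unit near `p`, and eliminating `∂f/∂x₀`
between Euler's identity and `∑ aᵢ ∂f/∂xᵢ = 0` expresses `g` through its partial derivatives with
coefficients `(yᵢ - aᵢ / a₀) / d`, which vanish at `q`.

Conversely, an analytic Euler relation for `g` lifts to a relation `f = ∑_{i ≥ 1} Aᵢ ∂f/∂xᵢ` near
`p` with `Aᵢ` analytic and vanishing at `p`. Let `𝔪` be the maximal ideal of polynomials vanishing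
at `p`. Replacing the `Aᵢ` by Taylor polynomials shows `f ∈ 𝔪 (∂f/∂xᵢ)_{i ≥ 1} + 𝔪ᵏ` for every
`k`, so by Krull's intersection theorem `u f = ∑_{i ≥ 1} bᵢ ∂f/∂xᵢ` for polynomials `u`, `bᵢ` with
`u(p) = 1` and `bᵢ(p) = 0`. By Euler's identity `u x - d (0, b)` is a syzygy, and its value at `p`
is `p`.
-/

section Krull

variable {R M : Type*} [CommRing R] [IsNoetherianRing R] [AddCommGroup M] [Module R M]
  [Module.Finite R M]

theorem exists_one_sub_smul_mem_of_forall_mem_sup_pow_smul_top (I : Ideal R) (N : Submodule R M)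
    {x : M} (hx : ∀ k : ℕ, x ∈ N ⊔ I ^ k • (⊤ : Submodule R M)) :
    ∃ r ∈ I, (1 - r) • x ∈ N := by
  have hmk : N.mkQ x ∈ (⨅ k : ℕ, I ^ k • ⊤ : Submodule R (M ⧸ N)) := by
    refine (Submodule.mem_iInf _).2 fun k => ?_
    simpa [Submodule.map_sup, Submodule.map_smul''] using
      Submodule.mem_map_of_mem (f := N.mkQ) (hx k)
  obtain ⟨⟨r, hr⟩, hrx⟩ := (I.mem_iInf_smul_pow_eq_bot_iff _).1 hmk
  refine ⟨r, hr, (Submodule.Quotient.mk_eq_zero N).1 ?_⟩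
  rw [← Submodule.mkQ_apply, map_smul, sub_smul, one_smul, sub_eq_zero]
  exact hrx.symm

end Krull

theorem finrank_span_eq_finrank_span_union_singleton_iff {K V : Type*} [DivisionRing K]
    [AddCommGroup V] [Module K V] [FiniteDimensional K V] {s : Set V} {v : V} :
    Module.finrank K (Submodule.span K s) = Module.finrank K (Submodule.span K (s ∪ {v})) ↔
      v ∈ Submodule.span K s := by
  refine ⟨fun h => ?_, fun h => ?_⟩
  · rw [Submodule.eq_of_le_of_finrank_eq (Submodule.span_mono Set.subset_union_left) h]
    exact Submodule.subset_span (.inr rfl)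
  · rw [Set.union_singleton, Submodule.span_insert_eq_span h]

section Translate

variable {σ R : Type*}

section CommSemiring

variable [CommSemiring R]

/-- The translation `f(x) ↦ f(x + v)` of polynomials, used to move the point `v` to the
origin. -/
def translateHom (v : σ → R) : MvPolynomial σ R →ₐ[R] MvPolynomial σ R :=
  aeval fun i => X i + C (v i)

@[simp]
theorem translateHom_X (v : σ → R) (i : σ) : translateHom v (X i) = X i + C (v i) :=
  aeval_X _ i

theorem eval_translateHom (v y : σ → R) (f : MvPolynomial σ R) :
    eval y (translateHom v f) = eval (y + v) f := by
  rw [translateHom, ← aeval_eq_eval, comp_aeval_apply, ← aeval_eq_eval]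
  congr 2
  funext i
  simp

end CommSemiring

variable [CommRing R]

theorem translateHom_neg_translateHom (v : σ → R) (f : MvPolynomial σ R) :
    translateHom (-v) (translateHom v f) = f := by
  have hcomp : (translateHom (-v)).comp (translateHom v) = AlgHom.id R (MvPolynomial σ R) := by
    ext1 i
    simp [translateHom]
  exact DFunLike.congr_fun hcomp f

theorem map_translateHom_neg_idealOfVars_le (p : σ → R) :
    (idealOfVars σ R).map (translateHom (-p)) ≤ RingHom.ker (eval p) := by
  rw [idealOfVars, Ideal.map_span, Ideal.span_le]
  rintro _ ⟨_, ⟨i, rfl⟩, rfl⟩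
  simp [RingHom.mem_ker]

end Translate

theorem eval_smul_of_isHomogeneous {σ R : Type*} [CommSemiring R] {d : ℕ} {f : MvPolynomial σ R}
    (hf : f.IsHomogeneous d) (c : R) (y : σ → R) : eval (c • y) f = c ^ d * eval y f := by
  simp only [eval_eq, Finset.mul_sum]
  refine Finset.sum_congr rfl fun s hs => ?_
  simp only [Pi.smul_apply, smul_eq_mul, mul_pow, Finset.prod_mul_distrib,
    Finset.prod_pow_eq_pow_sum, ← hf.degree_eq_sum_deg_support hs]
  ring

section OrderOfVanishing

open Asymptotics Filter Topology

variable {𝕜 : Type*} [NontriviallyNormedField 𝕜]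

theorem X_pow_dvd_of_isBigO {k : ℕ} {P : Polynomial 𝕜}
    (h : (fun t : 𝕜 => P.eval t) =O[𝓝[≠] 0] fun t => t ^ k) : Polynomial.X ^ k ∣ P := by
  induction k with
  | zero => simp
  | succ k ih =>
    have hle : (fun t : 𝕜 => t ^ (k + 1)) =O[𝓝[≠] 0] fun t => t ^ k :=
      (isLittleO_pow_pow k.lt_succ_self).isBigO.mono nhdsWithin_le_nhds
    obtain ⟨Q, rfl⟩ := ih (h.trans hle)
    have hQ : (fun t : 𝕜 => Q.eval t) =O[𝓝[≠] 0] fun t => t := by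
      have hne : ∀ᶠ t : 𝕜 in 𝓝[≠] 0, t ^ k ≠ 0 :=
        eventually_mem_nhdsWithin.mono fun _ ht => pow_ne_zero k ht
      simp only [Polynomial.eval_mul, Polynomial.eval_pow, Polynomial.eval_X] at h
      refine ((isBigO_mul_iff_isBigO_div hne).1 h).congr' .rfl ?_
      filter_upwards [hne] with t ht
      rw [pow_succ, mul_div_cancel_left₀ _ ht]
    have hQ0 : Q.eval 0 = 0 := tendsto_nhds_unique
      ((Q.continuous.tendsto 0).mono_left nhdsWithin_le_nhds)
      (hQ.trans_tendsto (tendsto_id.mono_left nhdsWithin_le_nhds))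
    rw [pow_succ]
    exact mul_dvd_mul_left _
      (Polynomial.X_dvd_iff.2 (by rwa [Polynomial.coeff_zero_eq_eval_zero]))

variable {ι : Type*} [Fintype ι]

theorem homogeneousComponent_eq_zero_of_isBigO {k j : ℕ} (hj : j < k) {f : MvPolynomial ι 𝕜}
    (hf : (fun y : ι → 𝕜 => eval y f) =O[𝓝 0] fun y => ‖y‖ ^ k) :
    homogeneousComponent j f = 0 := by
  refine (homogeneousComponent_isHomogeneous j f).eq_zero_of_forall_eval_eq_zero fun y => ?_
  -- `P` is the restriction of `f` to the line spanned by `y`.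
  let P : Polynomial 𝕜 := ∑ l ∈ Finset.range (f.totalDegree + 1),
    Polynomial.C (eval y (homogeneousComponent l f)) * Polynomial.X ^ l
  have hP (t : 𝕜) : P.eval t = eval (t • y) f := by
    conv_rhs => rw [← sum_homogeneousComponent f, map_sum]
    simp only [P, Polynomial.eval_finsetSum, Polynomial.eval_mul, Polynomial.eval_C,
      Polynomial.eval_pow, Polynomial.eval_X, mul_comm,
      eval_smul_of_isHomogeneous (homogeneousComponent_isHomogeneous _ f)]
  have hcoeff : P.coeff j = eval y (homogeneousComponent j f) := by
    simp only [P, Polynomial.finsetSum_coeff, Polynomial.coeff_C_mul_X_pow, Finset.sum_ite_eq,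
      Finset.mem_range, ite_eq_left_iff]
    intro hlt
    rw [homogeneousComponent_eq_zero j f (by omega), map_zero]
  have hline : Tendsto (fun t : 𝕜 => t • y) (𝓝 0) (𝓝 0) :=
    (by fun_prop : Continuous fun t : 𝕜 => t • y).tendsto' _ _ (zero_smul 𝕜 y)
  have hPO : (fun t : 𝕜 => P.eval t) =O[𝓝 0] fun t => t ^ k := by
    simp only [hP]
    refine (hf.comp_tendsto hline).trans (.of_bound (‖y‖ ^ k) (.of_forall fun t => ?_))
    simp [norm_smul, mul_pow, mul_comm]
  rw [← hcoeff]
  exact Polynomial.X_pow_dvd_iff.1 (X_pow_dvd_of_isBigO (hPO.mono nhdsWithin_le_nhds)) j hj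

theorem mem_idealOfVars_pow_of_isBigO {k : ℕ} {f : MvPolynomial ι 𝕜}
    (hf : (fun y : ι → 𝕜 => eval y f) =O[𝓝 0] fun y => ‖y‖ ^ k) :
    f ∈ idealOfVars ι 𝕜 ^ k := by
  rw [mem_pow_idealOfVars_iff']
  intro s hs
  simpa [coeff_homogeneousComponent] using
    congrArg (coeff s) (homogeneousComponent_eq_zero_of_isBigO hs hf)

theorem mem_ker_eval_pow_of_isBigO {k : ℕ} {f : MvPolynomial ι 𝕜} {p : ι → 𝕜}
    (hf : (fun x => eval x f) =O[𝓝 p] fun x => ‖x - p‖ ^ k) :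
    f ∈ RingHom.ker (eval p) ^ k := by
  have hp : Tendsto (fun y : ι → 𝕜 => y + p) (𝓝 0) (𝓝 p) :=
    (continuous_add_const p).tendsto' _ _ (zero_add p)
  have hvars : translateHom p f ∈ idealOfVars ι 𝕜 ^ k := by
    apply mem_idealOfVars_pow_of_isBigO
    simpa [Function.comp_def, eval_translateHom] using hf.comp_tendsto hp
  rw [← translateHom_neg_translateHom p f]
  refine Ideal.pow_right_mono (map_translateHom_neg_idealOfVars_le p) k ?_
  rw [← Ideal.map_pow]
  exact Ideal.mem_map_of_mem _ hvars

end OrderOfVanishing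

section AnalyticRelations

open Filter Topology

variable {𝕜 ι κ : Type*} [NontriviallyNormedField 𝕜]

theorem exists_mvPolynomial_eval_eq_apply_diag [Finite ι] {j : ℕ}
    (F : ContinuousMultilinearMap 𝕜 (fun _ : Fin j => ι → 𝕜) 𝕜) :
    ∃ T : MvPolynomial ι 𝕜, ∀ y, eval y T = F fun _ => y := by
  classical
  have := Fintype.ofFinite ι
  refine ⟨∑ r : Fin j → ι, C (F fun l => Pi.single (r l) 1) * ∏ l, X (r l), fun y => ?_⟩
  have hy : (fun _ : Fin j => y) = fun _ => ∑ i, y i • (Pi.single i 1 : ι → 𝕜) :=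
    funext fun _ => pi_eq_sum_univ' y
  rw [hy, F.map_sum]
  simp [F.map_smul_univ, mul_comm]

variable [Fintype ι]

theorem exists_mvPolynomial_isBigO_sub {A : (ι → 𝕜) → 𝕜} {p : ι → 𝕜} (hA : AnalyticAt 𝕜 A p)
    (k : ℕ) : ∃ T : MvPolynomial ι 𝕜,
      (fun x => A x - eval x T) =O[𝓝 p] fun x => ‖x - p‖ ^ k := by
  obtain ⟨F, hF⟩ := hA
  choose T hT using fun j => exists_mvPolynomial_eval_eq_apply_diag (F j)
  have hp : Tendsto (fun x : ι → 𝕜 => x - p) (𝓝 p) (𝓝 0) :=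
    (continuous_sub_right p).tendsto' _ _ (sub_self p)
  refine ⟨translateHom (-p) (∑ j ∈ Finset.range k, T j), ?_⟩
  simpa [Function.comp_def, eval_translateHom, hT, FormalMultilinearSeries.partialSum,
    ← sub_eq_add_neg] using (hF.isBigO_sub_partialSum_pow k).comp_tendsto hp

variable [Fintype κ]

theorem mem_ker_eval_smul_span_sup_pow {f : MvPolynomial ι 𝕜} {D : κ → MvPolynomial ι 𝕜}
    {p : ι → 𝕜} {A : κ → (ι → 𝕜) → 𝕜} (hA : ∀ i, AnalyticAt 𝕜 (A i) p) (hA0 : ∀ i, A i p = 0)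
    (hf : ∀ᶠ x in 𝓝 p, eval x f = ∑ i, A i x * eval x (D i)) (k : ℕ) :
    f ∈ RingHom.ker (eval p) • Ideal.span (Set.range D) ⊔ RingHom.ker (eval p) ^ k := by
  choose T hT using fun i => exists_mvPolynomial_isBigO_sub (hA i) (k + 1)
  have hT0 (i : κ) : T i ∈ RingHom.ker (eval p) := by
    have hAT : A i p - eval p (T i) = 0 := (hT i).eq_zero_of_norm_pow k.succ_ne_zero
    simpa [RingHom.mem_ker, hA0] using hAT
  have hrem : f - ∑ i, T i * D i ∈ RingHom.ker (eval p) ^ (k + 1) := by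
    apply mem_ker_eval_pow_of_isBigO
    have hbound : (fun x => ∑ i, (A i x - eval x (T i)) * eval x (D i)) =O[𝓝 p]
        fun x => ‖x - p‖ ^ (k + 1) := by
      refine .fun_sum fun i _ => ?_
      simpa using (hT i).mul (((D i).continuous_eval.tendsto p).isBigO_one ℝ)
    refine hbound.congr' ?_ .rfl
    filter_upwards [hf] with x hx
    simp [hx, sub_mul, Finset.sum_sub_distrib]
  rw [← add_sub_cancel (∑ i, T i * D i) f]
  exact Submodule.add_mem_sup
    (sum_mem fun i _ => Submodule.smul_mem_smul (hT0 i) (Ideal.subset_span ⟨i, rfl⟩))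
    (Ideal.pow_le_pow_right k.le_succ hrem)

theorem exists_mul_eq_sum_of_eventually_eval_eq {f : MvPolynomial ι 𝕜}
    {D : κ → MvPolynomial ι 𝕜} {p : ι → 𝕜} {A : κ → (ι → 𝕜) → 𝕜}
    (hA : ∀ i, AnalyticAt 𝕜 (A i) p) (hA0 : ∀ i, A i p = 0)
    (hf : ∀ᶠ x in 𝓝 p, eval x f = ∑ i, A i x * eval x (D i)) :
    ∃ (u : MvPolynomial ι 𝕜) (b : κ → MvPolynomial ι 𝕜),
      eval p u = 1 ∧ (∀ i, eval p (b i) = 0) ∧ u * f = ∑ i, b i * D i := by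
  obtain ⟨r, hr, hrf⟩ := exists_one_sub_smul_mem_of_forall_mem_sup_pow_smul_top
    (RingHom.ker (eval p)) (RingHom.ker (eval p) • Ideal.span (Set.range D)) (x := f)
    fun k => by simpa using mem_ker_eval_smul_span_sup_pow hA hA0 hf k
  obtain ⟨b, hb, hsum⟩ := (Submodule.mem_ideal_smul_span_iff_exists_sum _ D _).1 hrf
  refine ⟨1 - r, b, by simp [RingHom.mem_ker.1 hr], hb, ?_⟩
  rw [← smul_eq_mul, ← hsum, Finsupp.sum_fintype _ _ (by simp)]
  simp

end AnalyticRelations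

section Dehomogenization

variable {n : ℕ}

theorem eval_dehom (f : MvPolynomial (Fin (n + 1)) ℂ) (y : Fin n → ℂ) :
    eval y (dehom n f) = eval (Fin.cons 1 y : Fin (n + 1) → ℂ) f := by
  rw [dehom, ← aeval_eq_eval, comp_aeval_apply, ← aeval_eq_eval]
  congr 2
  funext i
  cases i using Fin.cases <;> simp

theorem pderiv_dehom (f : MvPolynomial (Fin (n + 1)) ℂ) (i : Fin n) :
    pderiv i (dehom n f) = dehom n (pderiv i.succ f) := by
  unfold dehom
  induction f using MvPolynomial.induction_on with
  | C a => simp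
  | add f g hf hg => simp only [map_add, hf, hg]
  | mul_X f j hf =>
    have hX : pderiv i ((Fin.cons 1 X : Fin (n + 1) → MvPolynomial (Fin n) ℂ) j) =
        aeval (Fin.cons 1 X) (pderiv i.succ (X j : MvPolynomial (Fin (n + 1)) ℂ)) := by
      cases j using Fin.cases <;> simp [pderiv_X, Pi.single_apply, apply_ite]
    simp only [map_mul, Derivation.leibniz, hf, hX, aeval_X, smul_eq_mul, map_add]

theorem natCast_mul_dehom_eq {d : ℕ} {f : MvPolynomial (Fin (n + 1)) ℂ}
    (hf : f.IsHomogeneous d) :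
    (d : MvPolynomial (Fin n) ℂ) * dehom n f =
      dehom n (pderiv 0 f) + ∑ i, X i * pderiv i (dehom n f) := by
  simp only [pderiv_dehom]
  simpa [dehom, Fin.sum_univ_succ] using (congrArg (dehom n) hf.sum_X_mul_pderiv).symm

theorem natCast_mul_dehom_mul_dehom_eq_sum {d : ℕ} {f : MvPolynomial (Fin (n + 1)) ℂ}
    (hf : f.IsHomogeneous d) {a : Fin (n + 1) → MvPolynomial (Fin (n + 1)) ℂ}
    (ha : a ∈ syzSet n f) :
    (d : MvPolynomial (Fin n) ℂ) * dehom n (a 0) * dehom n f =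
      ∑ i, (dehom n (a 0) * X i - dehom n (a i.succ)) * pderiv i (dehom n f) := by
  have ha' : ∑ i, a i * pderiv i f = 0 := ha
  have hsyz : dehom n (a 0) * dehom n (pderiv 0 f) +
      ∑ i, dehom n (a i.succ) * pderiv i (dehom n f) = 0 := by
    simp only [pderiv_dehom]
    simpa [dehom, Fin.sum_univ_succ] using congrArg (dehom n) ha'
  simp only [sub_mul, mul_assoc, Finset.sum_sub_distrib, ← Finset.mul_sum]
  linear_combination dehom n (a 0) * natCast_mul_dehom_eq hf + hsyz

/-- The affine coordinates `x_i / x_0` of a point of the chart `x_0 ≠ 0` of `ℙⁿ`, as a function of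
its homogeneous coordinates. It takes the junk value `0` on the hyperplane `x_0 = 0`. -/
def affineChart (n : ℕ) (x : Fin (n + 1) → ℂ) : Fin n → ℂ :=
  fun i => x i.succ / x 0

theorem affineChart_of_zero_eq_one {x : Fin (n + 1) → ℂ} (hx : x 0 = 1) :
    affineChart n x = fun i => x i.succ := by
  funext i
  simp [affineChart, hx]

theorem analyticAt_affineChart {x : Fin (n + 1) → ℂ} (hx : x 0 ≠ 0) :
    AnalyticAt ℂ (affineChart n) x :=
  AnalyticAt.pi fun i =>
    ((ContinuousLinearMap.proj i.succ).analyticAt x).div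
      ((ContinuousLinearMap.proj (R := ℂ) 0).analyticAt x) hx

theorem eval_eq_pow_mul_eval_dehom {d : ℕ} {f : MvPolynomial (Fin (n + 1)) ℂ}
    (hf : f.IsHomogeneous d) {x : Fin (n + 1) → ℂ} (hx : x 0 ≠ 0) :
    eval x f = x 0 ^ d * eval (affineChart n x) (dehom n f) := by
  have hcone : x 0 • (Fin.cons 1 (affineChart n x) : Fin (n + 1) → ℂ) = x := by
    funext i
    cases i using Fin.cases <;> simp [affineChart, mul_div_cancel₀, hx]
  rw [eval_dehom, ← eval_smul_of_isHomogeneous hf, hcone]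

end Dehomogenization

section SyzygyCriterion

open Filter Topology

variable {n d : ℕ} {f : MvPolynomial (Fin (n + 1)) ℂ} {p : Fin (n + 1) → ℂ}

theorem coe_span_evSyz (n : ℕ) (f : MvPolynomial (Fin (n + 1)) ℂ) (p : Fin (n + 1) → ℂ) :
    (Submodule.span ℂ (evSyz n f p) : Set (Fin (n + 1) → ℂ)) = evSyz n f p := by
  let K := LinearMap.ker (Fintype.linearCombination (MvPolynomial (Fin (n + 1)) ℂ)
    fun i => pderiv i f)
  let ev := (aeval p : MvPolynomial (Fin (n + 1)) ℂ →ₐ[ℂ] ℂ).toLinearMap.compLeft (Fin (n + 1))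
  have hK : evSyz n f p = (K.restrictScalars ℂ).map ev := by
    ext v
    simp [evSyz, syzSet, K, ev, Fintype.linearCombination_apply, funext_iff, aeval_eq_eval]
  rw [hK, Submodule.span_eq]

theorem stronglyEulerHomogeneousAt_of_mem_evSyz (hd : 1 ≤ d) (hf : f.IsHomogeneous d)
    (hp0 : p 0 = 1) (hp : p ∈ evSyz n f p) : StronglyEulerHomogeneousAt n f p := by
  obtain ⟨a, ha, hap⟩ := hp
  have hd0 : (d : ℂ) ≠ 0 := Nat.cast_ne_zero.2 (by omega)
  have hcons : (Fin.cons 1 (fun i => p i.succ) : Fin (n + 1) → ℂ) = p := by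
    rw [← hp0]
    exact Fin.cons_self_tail p
  have hdehom (i : Fin (n + 1)) : eval (fun j => p j.succ) (dehom n (a i)) = p i := by
    rw [eval_dehom, hcons]
    exact congrFun hap i
  have hana (P : MvPolynomial (Fin n) ℂ) (y : Fin n → ℂ) :
      AnalyticAt ℂ (fun y => eval y P) y :=
    AnalyticOnNhd.eval_mvPolynomial P y (Set.mem_univ y)
  refine ⟨{y | eval y (dehom n (a 0)) ≠ 0},
    fun i y => (d : ℂ)⁻¹ * (y i - eval y (dehom n (a i.succ)) / eval y (dehom n (a 0))),
    isOpen_ne_fun (continuous_eval _) continuous_const, ?_, fun i y hy => ?_, fun i => ?_,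
    fun y hy => ?_⟩
  · simp [hdehom, hp0]
  · exact analyticAt_const.mul
      (((ContinuousLinearMap.proj i).analyticAt y).sub ((hana _ y).div (hana _ y) hy))
  · simp [hdehom, hp0]
  · have hy0 : eval y (dehom n (a 0)) ≠ 0 := hy
    have hrel := congrArg (eval y) (natCast_mul_dehom_mul_dehom_eq_sum hf ha)
    simp only [map_sum, map_mul, map_sub, map_natCast, eval_X] at hrel
    rw [← mul_right_inj' (mul_ne_zero hd0 hy0), hrel, Finset.mul_sum]
    refine Finset.sum_congr rfl fun i _ => ?_
    field_simp

theorem exists_eventually_eval_eq_sum_pderiv_succ (hd : 1 ≤ d) (hf : f.IsHomogeneous d)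
    (hp0 : p 0 = 1) (h : StronglyEulerHomogeneousAt n f p) :
    ∃ A : Fin n → (Fin (n + 1) → ℂ) → ℂ, (∀ i, AnalyticAt ℂ (A i) p) ∧ (∀ i, A i p = 0) ∧
      ∀ᶠ x in 𝓝 p, eval x f = ∑ i, A i x * eval x (pderiv i.succ f) := by
  obtain ⟨U, a, hU, hpU, ha, ha0, hg⟩ := h
  have hp0' : p 0 ≠ 0 := hp0 ▸ one_ne_zero
  rw [← affineChart_of_zero_eq_one hp0] at hpU ha0
  have hx0 : AnalyticAt ℂ (fun x : Fin (n + 1) → ℂ => x 0) p :=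
    (ContinuousLinearMap.proj (R := ℂ) 0).analyticAt p
  have hchart := analyticAt_affineChart hp0'
  -- The factor `x 0` accounts for the partial derivatives having degree one less than `f`.
  refine ⟨fun i x => x 0 * a i (affineChart n x), fun i => hx0.mul ((ha i _ hpU).comp hchart),
    fun i => by simp [ha0], ?_⟩
  filter_upwards [hchart.continuousAt.eventually_mem (hU.mem_nhds hpU),
    hx0.continuousAt.eventually_ne hp0'] with x hxU hx0
  rw [eval_eq_pow_mul_eval_dehom hf hx0, hg _ hxU, Finset.mul_sum]
  refine Finset.sum_congr rfl fun i _ => ?_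
  rw [eval_eq_pow_mul_eval_dehom hf.pderiv hx0, pderiv_dehom, ← mul_pow_sub_one (by omega : d ≠ 0)]
  ring

theorem mem_evSyz_of_mul_eq_sum_pderiv_succ (hf : f.IsHomogeneous d)
    {u : MvPolynomial (Fin (n + 1)) ℂ} {b : Fin n → MvPolynomial (Fin (n + 1)) ℂ}
    (hu : eval p u = 1) (hb : ∀ i, eval p (b i) = 0)
    (hub : u * f = ∑ i, b i * pderiv i.succ f) : p ∈ evSyz n f p := by
  let b' : Fin (n + 1) → MvPolynomial (Fin (n + 1)) ℂ := Fin.cons 0 b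
  refine ⟨fun i => u * X i - (d : MvPolynomial (Fin (n + 1)) ℂ) * b' i, ?_, ?_⟩
  · have hb' : ∑ i, b' i * pderiv i f = u * f := by simp [b', Fin.sum_univ_succ, hub]
    have hEuler := hf.sum_X_mul_pderiv
    simp only [syzSet, Set.mem_ofPred_eq, sub_mul, mul_assoc, Finset.sum_sub_distrib,
      ← Finset.mul_sum, hb', hEuler, nsmul_eq_mul]
    ring
  · funext i
    cases i using Fin.cases <;> simp [b', hu, hb]

theorem stronglyEulerHomogeneousAt_iff_mem_evSyz (hd : 1 ≤ d) (hf : f.IsHomogeneous d)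
    (hp0 : p 0 = 1) : StronglyEulerHomogeneousAt n f p ↔ p ∈ evSyz n f p := by
  refine ⟨fun h => ?_, stronglyEulerHomogeneousAt_of_mem_evSyz hd hf hp0⟩
  obtain ⟨A, hA, hA0, hfA⟩ := exists_eventually_eval_eq_sum_pderiv_succ hd hf hp0 h
  obtain ⟨u, b, hu, hb, hub⟩ := exists_mul_eq_sum_of_eventually_eval_eq hA hA0 hfA
  exact mem_evSyz_of_mul_eq_sum_pderiv_succ hf hu hb hub

theorem syzygy_rank_criterion_general (n d : ℕ) (hd : 1 ≤ d)
    (f : MvPolynomial (Fin (n + 1)) ℂ) (hhom : f.IsHomogeneous d)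
    (p : Fin (n + 1) → ℂ) (hp0 : p 0 = 1) :
    (StronglyEulerHomogeneousAt n f p ↔ syzRank n f p = augSyzRank n f p) ∧
    (StronglyEulerHomogeneousAt n f p ↔ p ∈ Submodule.span ℂ (evSyz n f p)) := by
  have hmem : StronglyEulerHomogeneousAt n f p ↔ p ∈ Submodule.span ℂ (evSyz n f p) := by
    rw [← SetLike.mem_coe, coe_span_evSyz]
    exact stronglyEulerHomogeneousAt_iff_mem_evSyz hd hhom hp0
  exact ⟨hmem.trans finrank_span_eq_finrank_span_union_singleton_iff.symm, hmem⟩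

end SyzygyCriterion

/-- **Syzygy Rank Criterion.** A reduced projective hypersurface `D = V(f)` is strongly Euler
homogeneous at `p ∈ D` iff `rk M'_f(p) = rk M_f(p)`, equivalently iff `p` lies in the span of
the evaluated Jacobian syzygies at `p`. -/
theorem syzygy_rank_criterion (n d : ℕ) (hn : 1 ≤ n) (hd : 1 ≤ d)
    (f : MvPolynomial (Fin (n + 1)) ℂ) (hsf : Squarefree f) (hhom : f.IsHomogeneous d)
    (p : Fin (n + 1) → ℂ) (hp0 : p 0 = 1) (hpf : eval p f = 0) :
    (StronglyEulerHomogeneousAt n f p ↔ syzRank n f p = augSyzRank n f p) ∧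
    (StronglyEulerHomogeneousAt n f p ↔ p ∈ Submodule.span ℂ (evSyz n f p)) :=
  syzygy_rank_criterion_general n d hd f hhom p hp0

end
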